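/- Let p > N ≥ 2, R > 0, and γ₀ = 2^{N-p}·(2^{(p-N)/(p-1)} − 1)^{p-1}. For the punctured ball Ḃ_R = B_R∖{0}, one has R_{p,γ}(Ḃ_R) > r_{Ḃ_R} for every γ₀ ≤ γ < 1; in fact R_{p,γ₀}(Ḃ_R) = R while r_{Ḃ_R} = R/2. -/

import Mathlib

open MeasureTheory Filter
open scoped ENNReal

noncomputable section

/-- Relative `p`-capacity of a compact set `K` inside an open set `E`:
infimum of the `p`-Dirichlet energy over smooth compactly supported functions
in `E` which are at least `1` on `K`. -/
noncomputable def pCapacity {N : ℕ} (p : ℝ) (K E : Set (EuclideanSpace ℝ (Fin N))) : ℝ :=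
  sInf {c : ℝ | ∃ φ : EuclideanSpace ℝ (Fin N) → ℝ, ContDiff ℝ (⊤ : ℕ∞) φ ∧ HasCompactSupport φ ∧
    tsupport φ ⊆ E ∧ (∀ x ∈ K, 1 ≤ φ x) ∧ c = ∫ x, ‖fderiv ℝ φ x‖ ^ p}

/-- `closedBall x₀ r \ Ω` is `(p,γ)`-negligible. -/
def IsNegligible {N : ℕ} (p γ : ℝ) (Ω : Set (EuclideanSpace ℝ (Fin N)))
    (x₀ : EuclideanSpace ℝ (Fin N)) (r : ℝ) : Prop :=
  pCapacity p (Metric.closedBall x₀ r \ Ω) (Metric.ball x₀ (2*r)) ≤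
    γ * pCapacity p (Metric.closedBall x₀ r) (Metric.ball x₀ (2*r))

/-- The `(p,γ)`-capacitary inradius of an open set, as an extended nonnegative real. -/
noncomputable def capInradius {N : ℕ} (p γ : ℝ) (Ω : Set (EuclideanSpace ℝ (Fin N))) : ℝ≥0∞ :=
  sSup {ρ : ℝ≥0∞ | ∃ r : ℝ, 0 < r ∧ ρ = ENNReal.ofReal r ∧
    ∃ x₀ : EuclideanSpace ℝ (Fin N), IsNegligible p γ Ω x₀ r}

/-- The classical inradius, as an extended nonnegative real. -/
noncomputable def eInradius {N : ℕ} (Ω : Set (EuclideanSpace ℝ (Fin N))) : ℝ≥0∞ :=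
  sSup {ρ : ℝ≥0∞ | ∃ r : ℝ, 0 < r ∧ ρ = ENNReal.ofReal r ∧
    ∃ x₀ : EuclideanSpace ℝ (Fin N), Metric.ball x₀ r ⊆ Ω}

/-!
Hölder's inequality along the rays from `x₀` bounds from below the energy of a test function equal
to `1` at the points `x₀ + a • θ`, for `θ` in a set `S` of directions, and radial test functions
attain the bound when `S` is the whole sphere. So the capacity of `closedBall x₀ a` relative to
`ball x₀ b` is explicit, including `a = 0`, as points have positive capacity for `p > N`.

For `r < R`, the part of `closedBall 0 r` outside the punctured ball is the point `0`, whose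
capacity is `γ₀` times that of `closedBall 0 r`. For `r > R` and any center `x₀`, at least half of
the sphere of radius `r`, namely the directions `θ` with `⟪x₀, θ⟫ ≥ 0`, lies outside `ball 0 R`, so
the ratio of capacities is at least `1 / 2 > γ₀`.
-/

section RadialModulus

open Set

variable {ν p a b : ℝ}

/-- The integral `∫ₐᵇ s ^ (-ν / (p - 1)) ds` of the weight dual to `s ^ ν` in Hölder's inequality.
For `ν = N - 1`, its `(1 - p)`-th power is the `p`-capacity of a ball of radius `a` inside the
concentric ball of radius `b`, per unit of area of the unit sphere of `ℝᴺ`. -/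
def radialModulus (ν p a b : ℝ) : ℝ := ∫ s in a..b, s ^ (-(ν / (p - 1)))

lemma intervalIntegrable_dual_weight (hp : 1 < p) (hν : ν < p - 1) :
    IntervalIntegrable (fun s : ℝ ↦ s ^ (-(ν / (p - 1)))) volume a b :=
  intervalIntegral.intervalIntegrable_rpow' <| by
    linarith [(div_lt_one (sub_pos.2 hp)).2 hν]

lemma radialModulus_eq (hp : 1 < p) (hν : ν < p - 1) :
    radialModulus ν p a b =
      (b ^ (1 - ν / (p - 1)) - a ^ (1 - ν / (p - 1))) / (1 - ν / (p - 1)) := by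
  have hexp : -1 < -(ν / (p - 1)) := by linarith [(div_lt_one (sub_pos.2 hp)).2 hν]
  rw [radialModulus, integral_rpow (Or.inl hexp), neg_add_eq_sub]

lemma radialModulus_pos (hp : 1 < p) (hν : ν < p - 1) (ha : 0 ≤ a) (hab : a < b) :
    0 < radialModulus ν p a b :=
  intervalIntegral.intervalIntegral_pos_of_pos_on (intervalIntegrable_dual_weight hp hν)
    (fun _ hs ↦ Real.rpow_pos_of_pos (ha.trans_lt hs.1) _) hab

lemma tendsto_radialModulus_shrink (hp : 1 < p) (hν : ν < p - 1) :
    Tendsto (fun δ ↦ radialModulus ν p (a + δ) (b - δ)) (nhds 0)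
      (nhds (radialModulus ν p a b)) := by
  have hα : 0 ≤ 1 - ν / (p - 1) := by linarith [(div_lt_one (sub_pos.2 hp)).2 hν]
  simp only [radialModulus_eq hp hν]
  refine Tendsto.div_const (Tendsto.sub ?_ ?_) _ <;>
    refine Tendsto.rpow_const ?_ (Or.inr hα)
  · exact (continuous_sub_left b).tendsto' 0 b (sub_zero b)
  · exact (continuous_const_add a).tendsto' 0 a (add_zero a)

lemma memLp_of_integrable_rpow {α : Type*} [MeasurableSpace α] {μ : Measure α} {f : α → ℝ}
    (hp : 0 < p) (hf : AEStronglyMeasurable f μ) (hf₀ : 0 ≤ᵐ[μ] f)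
    (hint : Integrable (fun x ↦ f x ^ p) μ) : MemLp f (ENNReal.ofReal p) μ := by
  rw [← integrable_norm_rpow_iff hf (ENNReal.ofReal_pos.2 hp).ne' ENNReal.ofReal_ne_top,
    ENNReal.toReal_ofReal hp.le]
  refine hint.congr ?_
  filter_upwards [hf₀] with x hx
  rw [Real.norm_of_nonneg hx]

lemma rpow_div_mul_rpow_eq (hp : 0 < p) {s t : ℝ} (hs : 0 ≤ s) (ht : 0 ≤ t) :
    (s ^ (ν / p) * t) ^ p = s ^ ν * t ^ p := by
  rw [Real.mul_rpow (Real.rpow_nonneg hs _) ht, ← Real.rpow_mul hs, div_mul_cancel₀ _ hp.ne']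

lemma rpow_neg_div_rpow_conjExponent (hp : 0 < p) {s : ℝ} (hs : 0 ≤ s) :
    (s ^ (-(ν / p))) ^ p.conjExponent = s ^ (-(ν / (p - 1))) := by
  rw [← Real.rpow_mul hs, Real.conjExponent]
  congr 1
  field_simp

lemma memLp_weight_mul (hν : 0 ≤ ν) (hp : 0 < p) (ha : 0 ≤ a) {f : ℝ → ℝ}
    (hf : ContinuousOn f (Icc a b)) (hf₀ : ∀ s ∈ Icc a b, 0 ≤ f s) :
    MemLp (fun s ↦ s ^ (ν / p) * f s) (ENNReal.ofReal p) (volume.restrict (Ioc a b)) := by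
  have hcont : ContinuousOn (fun s ↦ s ^ (ν / p) * f s) (Icc a b) :=
    (continuousOn_id.rpow_const fun _ _ ↦ Or.inr (by positivity)).mul hf
  refine memLp_of_integrable_rpow hp
    ((hcont.mono Ioc_subset_Icc_self).aestronglyMeasurable measurableSet_Ioc) ?_
    ((hcont.rpow_const fun _ _ ↦ Or.inr hp.le).integrableOn_Icc.mono_set Ioc_subset_Icc_self)
  filter_upwards [ae_restrict_mem measurableSet_Ioc] with s hs
  exact mul_nonneg (Real.rpow_nonneg (ha.trans hs.1.le) _) (hf₀ s (Ioc_subset_Icc_self hs))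

lemma memLp_dual_weight (hp : 1 < p) (hν : ν < p - 1) (ha : 0 ≤ a) :
    MemLp (fun s ↦ s ^ (-(ν / p))) (ENNReal.ofReal p.conjExponent)
      (volume.restrict (Ioc a b)) := by
  refine memLp_of_integrable_rpow (Real.HolderConjugate.conjExponent hp).symm.pos (by fun_prop) ?_
    ((intervalIntegrable_dual_weight hp hν).1.congr_fun (fun s hs ↦ ?_) measurableSet_Ioc)
  · filter_upwards [ae_restrict_mem measurableSet_Ioc] with s hs
    exact Real.rpow_nonneg (ha.trans hs.1.le) _
  · exact (rpow_neg_div_rpow_conjExponent (by linarith) (ha.trans hs.1.le)).symm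

lemma integral_le_weighted_Lp_mul_radialModulus (hν₀ : 0 ≤ ν) (hν : ν < p - 1) (ha : 0 ≤ a)
    (hab : a ≤ b) {f : ℝ → ℝ} (hf : ContinuousOn f (Icc a b)) (hf₀ : ∀ s ∈ Icc a b, 0 ≤ f s) :
    ∫ s in a..b, f s ≤
      (∫ s in a..b, s ^ ν * f s ^ p) ^ (1 / p) *
        radialModulus ν p a b ^ (1 / p.conjExponent) := by
  have hp : 1 < p := by linarith
  have hp₀ : 0 < p := by linarith
  have hpos : ∀ s ∈ Ioc a b, 0 < s := fun s hs ↦ ha.trans_lt hs.1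
  have hsplit : ∀ s ∈ Ioc a b, s ^ (ν / p) * f s * s ^ (-(ν / p)) = f s := fun s hs ↦ by
    have hs₀ := hpos s hs
    rw [mul_right_comm, ← Real.rpow_add hs₀, add_neg_cancel, Real.rpow_zero, one_mul]
  have hnonneg : ∀ᵐ s ∂volume.restrict (Ioc a b), 0 ≤ s ∧ 0 ≤ f s := by
    filter_upwards [ae_restrict_mem measurableSet_Ioc] with s hs
    exact ⟨(hpos s hs).le, hf₀ s (Ioc_subset_Icc_self hs)⟩
  have hHolder := integral_mul_le_Lp_mul_Lq_of_nonneg (Real.HolderConjugate.conjExponent hp)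
    (hnonneg.mono fun s hs ↦ mul_nonneg (Real.rpow_nonneg hs.1 _) hs.2)
    (hnonneg.mono fun s hs ↦ Real.rpow_nonneg hs.1 _)
    (memLp_weight_mul hν₀ hp₀ ha hf hf₀) (memLp_dual_weight hp hν ha)
  rw [setIntegral_congr_fun measurableSet_Ioc hsplit,
    integral_congr_ae (hnonneg.mono fun s hs ↦ rpow_div_mul_rpow_eq hp₀ hs.1 hs.2),
    integral_congr_ae (hnonneg.mono fun s hs ↦ rpow_neg_div_rpow_conjExponent hp₀ hs.1)] at hHolder
  simpa only [radialModulus, intervalIntegral.integral_of_le hab] using hHolder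

lemma radialModulus_rpow_le_integral (hν₀ : 0 ≤ ν) (hν : ν < p - 1) (ha : 0 ≤ a) (hab : a < b)
    {f : ℝ → ℝ} (hf : ContinuousOn f (Icc a b)) (hf₀ : ∀ s ∈ Icc a b, 0 ≤ f s)
    (hf₁ : 1 ≤ ∫ s in a..b, f s) :
    radialModulus ν p a b ^ (1 - p) ≤ ∫ s in a..b, s ^ ν * f s ^ p := by
  have hp : 1 < p := by linarith
  have hM := radialModulus_pos hp hν ha hab
  set energy := ∫ s in a..b, s ^ ν * f s ^ p
  have henergy : 0 ≤ energy := intervalIntegral.integral_nonneg hab.le fun s hs ↦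
    mul_nonneg (Real.rpow_nonneg (ha.trans hs.1) _) (Real.rpow_nonneg (hf₀ s hs) _)
  have hone : 1 ≤ energy * radialModulus ν p a b ^ (p - 1) := calc
    1 ≤ (energy ^ (1 / p) * radialModulus ν p a b ^ (1 / p.conjExponent)) ^ p :=
      Real.one_le_rpow (hf₁.trans
        (integral_le_weighted_Lp_mul_radialModulus hν₀ hν ha hab.le hf hf₀)) (by linarith)
    _ = energy * radialModulus ν p a b ^ (p - 1) := by
      rw [Real.mul_rpow (by positivity) (by positivity), ← Real.rpow_mul henergy,
        ← Real.rpow_mul hM.le, one_div_mul_cancel (by linarith), Real.rpow_one]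
      congr 2
      rw [Real.conjExponent]
      field_simp
  rwa [← neg_sub p 1, Real.rpow_neg hM.le, inv_le_iff_one_le_mul₀ (by positivity)]

lemma exists_contDiff_cutoff {a' b' : ℝ} (ha : a < a') (hb : b' < b) :
    ∃ χ : ℝ → ℝ, ContDiff ℝ (⊤ : ℕ∞) χ ∧ (∀ s, χ s ∈ Icc 0 1) ∧
      Function.support χ ⊆ Ioo a b ∧ ∀ s ∈ Icc a' b', χ s = 1 := by
  obtain ⟨χ, hχ, hrange, hzero, hone⟩ :=
    exists_contMDiff_zero_iff_one_iff_of_isClosed (n := (⊤ : ℕ∞)) (modelWithCornersSelf ℝ ℝ)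
      isOpen_Ioo.isClosed_compl isClosed_Icc
      (disjoint_compl_left_iff_subset.2 (Icc_subset_Ioo ha hb))
  refine ⟨χ, contMDiff_iff_contDiff.1 hχ, fun s ↦ hrange ⟨s, rfl⟩, fun s hs ↦ ?_,
    fun s hs ↦ (hone s).1 hs⟩
  by_contra hs'
  exact hs ((hzero s).1 hs')

lemma contDiff_mul_rpow {χ : ℝ → ℝ} {n : WithTop ℕ∞} (ha : 0 < a) (hχ : ContDiff ℝ n χ)
    (hsupp : Function.support χ ⊆ Ioi a) (β : ℝ) : ContDiff ℝ n fun s ↦ χ s * s ^ β := by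
  refine contDiff_iff_contDiffAt.2 fun s ↦ ?_
  rcases lt_or_ge 0 s with hs | hs
  · exact hχ.contDiffAt.mul (Real.contDiffAt_rpow_const_of_ne hs.ne')
  · refine (contDiffAt_const (c := 0)).congr_of_eventuallyEq ?_
    filter_upwards [Iio_mem_nhds (hs.trans_lt ha)] with t ht
    rw [Function.notMem_support.1 fun h ↦ lt_asymm (mem_Ioi.1 (hsupp h)) ht, zero_mul]

lemma weight_mul_rpow_le_dual_weight (hp : 1 < p) {s t : ℝ} (hs : 0 < s)
    (ht : t ∈ Icc (0 : ℝ) 1) :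
    s ^ ν * (t * s ^ (-(ν / (p - 1)))) ^ p ≤ t * s ^ (-(ν / (p - 1))) := by
  have hexp : ν + -(ν / (p - 1)) * p = -(ν / (p - 1)) := by
    have : p - 1 ≠ 0 := by linarith
    field_simp
    ring
  calc s ^ ν * (t * s ^ (-(ν / (p - 1)))) ^ p = t ^ p * s ^ (-(ν / (p - 1))) := by
        rw [Real.mul_rpow ht.1 (Real.rpow_nonneg hs.le _), ← Real.rpow_mul hs.le, mul_left_comm,
          ← Real.rpow_add hs, hexp]
    _ ≤ t * s ^ (-(ν / (p - 1))) := by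
        gcongr
        exact Real.rpow_le_self_of_le_one ht.1 ht.2 hp.le

-- Equality in Hölder's inequality holds for `s ^ (-ν / (p - 1))`, of which `k` is a cutoff.
lemma exists_smooth_dual_weight (hp : 1 < p) (ν : ℝ) {a' b' : ℝ} (ha : 0 < a) (haa' : a < a')
    (hab' : a' ≤ b') (hbb' : b' < b) :
    ∃ k : ℝ → ℝ, ContDiff ℝ (⊤ : ℕ∞) k ∧ Function.support k ⊆ Ioo a b ∧ (∀ s, 0 ≤ k s) ∧
      (∀ s, 0 < s → s ^ ν * k s ^ p ≤ k s) ∧ radialModulus ν p a' b' ≤ ∫ s, k s := by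
  obtain ⟨χ, hχ, hχ₀₁, hχsupp, hχ₁⟩ := exists_contDiff_cutoff haa' hbb'
  set k : ℝ → ℝ := fun s ↦ χ s * s ^ (-(ν / (p - 1))) with hk
  have hksmooth : ContDiff ℝ (⊤ : ℕ∞) k :=
    contDiff_mul_rpow ha hχ (hχsupp.trans Ioo_subset_Ioi_self) _
  have hksupp : Function.support k ⊆ Ioo a b :=
    (Function.support_mul_subset_left _ _).trans hχsupp
  have hk₀ : ∀ s, 0 ≤ k s := fun s ↦ by
    by_cases hs : s ∈ Ioo a b
    · exact mul_nonneg (hχ₀₁ s).1 (Real.rpow_nonneg (ha.trans hs.1).le _)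
    · exact (Function.notMem_support.1 fun h ↦ hs (hksupp h)).ge
  have hkint : Integrable k := hksmooth.continuous.integrable_of_hasCompactSupport
    (HasCompactSupport.of_support_subset_isCompact isCompact_Icc
      (hksupp.trans Ioo_subset_Icc_self))
  refine ⟨k, hksmooth, hksupp, hk₀, fun s hs ↦ weight_mul_rpow_le_dual_weight hp hs (hχ₀₁ s), ?_⟩
  calc radialModulus ν p a' b' = ∫ s in Ioc a' b', k s := by
        rw [radialModulus, intervalIntegral.integral_of_le hab']
        refine setIntegral_congr_fun measurableSet_Ioc fun s hs ↦ ?_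
        simp only [hk, hχ₁ s (Ioc_subset_Icc_self hs), one_mul]
    _ ≤ ∫ s, k s := setIntegral_le_integral hkint (Eventually.of_forall hk₀)

lemma integral_weight_mul_normalized_rpow_le {k : ℝ → ℝ} (hk₀ : ∀ s, 0 ≤ k s)
    (hk : ∀ s, 0 < s → s ^ ν * k s ^ p ≤ k s) (hI : 0 < ∫ s, k s) :
    ∫ s in Ioi (0 : ℝ), s ^ ν * |k s / ∫ t, k t| ^ p ≤ (∫ s, k s) ^ (1 - p) := by
  have hkint : Integrable k := .of_integral_ne_zero hI.ne'
  set I := ∫ s, k s with hIdef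
  calc ∫ s in Ioi (0 : ℝ), s ^ ν * |k s / I| ^ p ≤ ∫ s in Ioi (0 : ℝ), k s / I ^ p := by
        refine integral_mono_of_nonneg ?_ (hkint.div_const _).integrableOn ?_
        all_goals filter_upwards [ae_restrict_mem measurableSet_Ioi] with s (hs : 0 < s)
        · exact mul_nonneg (Real.rpow_nonneg hs.le _) (Real.rpow_nonneg (abs_nonneg _) _)
        · rw [abs_of_nonneg (div_nonneg (hk₀ s) hI.le), Real.div_rpow (hk₀ s) hI.le,
            ← mul_div_assoc]
          gcongr
          exact hk s hs
    _ ≤ ∫ s, k s / I ^ p :=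
        setIntegral_le_integral (hkint.div_const _)
          (Eventually.of_forall fun s ↦ div_nonneg (hk₀ s) (by positivity))
    _ = I ^ (1 - p) := by rw [integral_div, ← hIdef, Real.rpow_sub hI, Real.rpow_one]

lemma exists_smooth_profile (hp : 1 < p) (hν : ν < p - 1) {a' b' : ℝ} (ha : 0 < a) (haa' : a < a')
    (hab' : a' < b') (hbb' : b' < b) :
    ∃ g : ℝ → ℝ, ContDiff ℝ (⊤ : ℕ∞) g ∧ Function.support g ⊆ Ioo a b ∧ ∫ s, g s = 1 ∧
      ∫ s in Ioi (0 : ℝ), s ^ ν * |g s| ^ p ≤ radialModulus ν p a' b' ^ (1 - p) := by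
  obtain ⟨k, hk, hksupp, hk₀, hkp, hMI⟩ := exists_smooth_dual_weight hp ν ha haa' hab'.le hbb'
  have hM : 0 < radialModulus ν p a' b' := radialModulus_pos hp hν (ha.trans haa').le hab'
  have hI : 0 < ∫ s, k s := hM.trans_le hMI
  refine ⟨fun s ↦ k s / ∫ t, k t, hk.div_const _,
    fun s hs ↦ hksupp fun h ↦ hs (by simp only [h, zero_div]), ?_, ?_⟩
  · rw [integral_div, div_self hI.ne']
  · exact (integral_weight_mul_normalized_rpow_le hk₀ hkp hI).trans
      (Real.rpow_le_rpow_of_nonpos hM hMI (by linarith))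

end RadialModulus

section RadialFunctions

open Set Metric Module Topology

variable {E : Type*} [NormedAddCommGroup E]

lemma eventuallyEq_const_comp_norm_sub {α : Type*} {f : ℝ → α} (hf₀ : f =ᶠ[𝓝 0] fun _ ↦ f 0)
    (x₀ : E) : (fun x ↦ f ‖x - x₀‖) =ᶠ[𝓝 x₀] fun _ ↦ f 0 :=
  ((continuous_id.sub continuous_const).norm.tendsto' x₀ 0 (by simp)).eventually hf₀

variable [InnerProductSpace ℝ E] {F : Type*} [NormedAddCommGroup F] [NormedSpace ℝ F] {f : ℝ → F}

lemma contDiff_comp_norm_sub {n : WithTop ℕ∞} (hf : ContDiff ℝ n f)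
    (hf₀ : f =ᶠ[𝓝 0] fun _ ↦ f 0) (x₀ : E) : ContDiff ℝ n fun x ↦ f ‖x - x₀‖ := by
  refine contDiff_iff_contDiffAt.2 fun x ↦ ?_
  rcases eq_or_ne x x₀ with rfl | hx
  · exact contDiffAt_const.congr_of_eventuallyEq (eventuallyEq_const_comp_norm_sub hf₀ x)
  · exact hf.contDiffAt.comp x ((contDiffAt_id.sub contDiffAt_const).norm ℝ (sub_ne_zero.2 hx))

lemma norm_fderiv_comp_norm_sub_le (hf : Differentiable ℝ f) (hf₀ : f =ᶠ[𝓝 0] fun _ ↦ f 0)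
    (x₀ x : E) : ‖fderiv ℝ (fun y ↦ f ‖y - x₀‖) x‖ ≤ ‖deriv f ‖x - x₀‖‖ := by
  rcases eq_or_ne x x₀ with rfl | hx
  · rw [(eventuallyEq_const_comp_norm_sub hf₀ x).fderiv_eq, fderiv_fun_const, Pi.zero_apply,
      norm_zero]
    exact norm_nonneg _
  · have hnorm : DifferentiableAt ℝ (fun y ↦ ‖y - x₀‖) x :=
      (differentiableAt_id.sub_const x₀).norm ℝ (sub_ne_zero.2 hx)
    have hlip : LipschitzWith 1 fun y ↦ ‖y - x₀‖ := by
      simpa only [dist_eq_norm] using LipschitzWith.dist_left x₀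
    calc ‖fderiv ℝ (fun y ↦ f ‖y - x₀‖) x‖
        = ‖(fderiv ℝ f ‖x - x₀‖).comp (fderiv ℝ (fun y ↦ ‖y - x₀‖) x)‖ := by
          rw [← fderiv_comp x (hf _) hnorm]
          rfl
      _ ≤ ‖fderiv ℝ f ‖x - x₀‖‖ * ‖fderiv ℝ (fun y ↦ ‖y - x₀‖) x‖ :=
          ContinuousLinearMap.opNorm_comp_le _ _
      _ ≤ ‖deriv f ‖x - x₀‖‖ := by
          rw [norm_deriv_eq_norm_fderiv]
          exact mul_le_of_le_one_right (norm_nonneg _) (norm_fderiv_le_of_lipschitz ℝ hlip)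

end RadialFunctions

section PolarCoordinates

open scoped Pointwise
open Set Metric Module

lemma integral_volumeIoiPow {F : Type*} [NormedAddCommGroup F] [NormedSpace ℝ F] (n : ℕ)
    (g : ℝ → F) :
    ∫ s, g s ∂(Measure.volumeIoiPow n) = ∫ s in Ioi (0 : ℝ), s ^ n • g s := by
  rw [Measure.volumeIoiPow, integral_withDensity_eq_integral_toReal_smul (by fun_prop) (by simp),
    integral_subtype_comap measurableSet_Ioi fun s : ℝ ↦ (ENNReal.ofReal (s ^ n)).toReal • g s]
  refine setIntegral_congr_fun measurableSet_Ioi fun s (hs : 0 < s) ↦ ?_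
  simp only [ENNReal.toReal_ofReal (pow_pos hs n).le]

variable {E : Type*} [NormedAddCommGroup E] [NormedSpace ℝ E]

lemma comp_homeomorphUnitSphereProd {α : Type*} (f : E → α) (x : ({0}ᶜ : Set E)) :
    f ((homeomorphUnitSphereProd E x).2.1 • (homeomorphUnitSphereProd E x).1.1) = f x := by
  have hx : ‖(x : E)‖ ≠ 0 := norm_ne_zero_iff.2 x.2
  simp [smul_smul, hx]

variable [FiniteDimensional ℝ E] [MeasurableSpace E] [BorelSpace E] (μ : Measure E)
  [μ.IsAddHaarMeasure]

lemma integrable_comp_polar {F : Type*} [NormedAddCommGroup F] {f : E → F}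
    (hf : Integrable f μ) :
    Integrable (fun q : sphere (0 : E) 1 × Ioi (0 : ℝ) ↦ f (q.2.1 • q.1.1))
      (μ.toSphere.prod (.volumeIoiPow (finrank ℝ E - 1))) := by
  rw [← μ.measurePreserving_homeomorphUnitSphereProd.integrable_comp_emb
    (Homeomorph.measurableEmbedding _)]
  change Integrable (fun x ↦ f ((homeomorphUnitSphereProd E x).2.1 •
    (homeomorphUnitSphereProd E x).1.1)) _
  simp only [comp_homeomorphUnitSphereProd]
  exact (integrableOn_iff_comap_subtypeVal (measurableSet_singleton _).compl).1 hf.integrableOn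

lemma integral_comp_polar [Nontrivial E] {F : Type*} [NormedAddCommGroup F] [NormedSpace ℝ F]
    (f : E → F) :
    ∫ q : sphere (0 : E) 1 × Ioi (0 : ℝ), f (q.2.1 • q.1.1)
      ∂(μ.toSphere.prod (.volumeIoiPow (finrank ℝ E - 1))) = ∫ x, f x ∂μ := by
  rw [← μ.measurePreserving_homeomorphUnitSphereProd.integral_comp
    (Homeomorph.measurableEmbedding _)]
  simp only [comp_homeomorphUnitSphereProd]
  rw [integral_subtype_comap (measurableSet_singleton _).compl f, restrict_compl_singleton]

lemma toSphere_mul_le_integral [Nontrivial E] {f : E → ℝ} (hf : Integrable f μ)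
    (hf₀ : ∀ x, 0 ≤ f x) {S : Set (sphere (0 : E) 1)} (hS : MeasurableSet S) {c : ℝ}
    (hc : ∀ θ ∈ S, c ≤ ∫ s in Ioi (0 : ℝ), s ^ (finrank ℝ E - 1) * f (s • θ.1)) :
    μ.toSphere.real S * c ≤ ∫ x, f x ∂μ := by
  have hint := integrable_comp_polar μ hf
  calc μ.toSphere.real S * c = ∫ _ in S, c ∂μ.toSphere := by
        rw [setIntegral_const, smul_eq_mul]
    _ ≤ ∫ θ in S, ∫ s, f (s.1 • θ.1) ∂(.volumeIoiPow (finrank ℝ E - 1)) ∂μ.toSphere :=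
        setIntegral_mono_on (integrable_const c) hint.integral_prod_left.integrableOn hS
          fun θ hθ ↦ (hc θ hθ).trans_eq
            (integral_volumeIoiPow _ fun s ↦ f (s • θ.1)).symm
    _ ≤ ∫ θ, ∫ s, f (s.1 • θ.1) ∂(.volumeIoiPow (finrank ℝ E - 1)) ∂μ.toSphere :=
        setIntegral_le_integral hint.integral_prod_left
          (Eventually.of_forall fun _ ↦ integral_nonneg fun _ ↦ hf₀ _)
    _ = ∫ x, f x ∂μ := by rw [← integral_prod _ hint, integral_comp_polar]

lemma toSphere_neg_preimage {S : Set (sphere (0 : E) 1)} (hS : MeasurableSet S) :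
    μ.toSphere (Neg.neg ⁻¹' S) = μ.toSphere S := by
  have hpre : MeasurableSet (Neg.neg ⁻¹' S) := hS.preimage continuous_neg.measurable
  have hcoe : ((↑) '' (Neg.neg ⁻¹' S) : Set E) = -((↑) '' S) := by
    ext x
    simp only [mem_image, mem_preimage, Set.mem_neg]
    exact ⟨fun ⟨θ, hθ, hx⟩ ↦ ⟨-θ, hθ, congrArg Neg.neg hx⟩,
      fun ⟨θ, hθ, hx⟩ ↦ ⟨-θ, by rwa [neg_neg], neg_eq_iff_eq_neg.2 hx⟩⟩
  rw [μ.toSphere_apply' hpre, μ.toSphere_apply' hS, hcoe, Set.smul_neg, Measure.measure_neg]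

lemma toSphere_real_univ_le_two_mul_halfSphere (ℓ : E →L[ℝ] ℝ) :
    μ.toSphere.real univ ≤ 2 * μ.toSphere.real {θ | 0 ≤ ℓ θ} := by
  have hS : MeasurableSet {θ : sphere (0 : E) 1 | 0 ≤ ℓ θ} :=
    (isClosed_le continuous_const (by fun_prop)).measurableSet
  have hcover : {θ : sphere (0 : E) 1 | 0 ≤ ℓ θ} ∪ Neg.neg ⁻¹' {θ | 0 ≤ ℓ θ} = univ := by
    ext θ
    simp [le_total]
  calc μ.toSphere.real univ
      ≤ μ.toSphere.real {θ | 0 ≤ ℓ θ} + μ.toSphere.real (Neg.neg ⁻¹' {θ | 0 ≤ ℓ θ}) :=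
        hcover ▸ measureReal_union_le _ _
    _ = 2 * μ.toSphere.real {θ | 0 ≤ ℓ θ} := by
        rw [measureReal_def _ (Neg.neg ⁻¹' _), toSphere_neg_preimage μ hS, ← measureReal_def,
          two_mul]

end PolarCoordinates

section CapacityTests

open Set Metric Module Topology

variable {V : Type*} [NormedAddCommGroup V] [NormedSpace ℝ V] {p a b : ℝ} {K U : Set V}
  {φ : V → ℝ} {x₀ : V}

/-- The competitors in the definition of the relative capacity of `K` in `U`: smooth functions
with compact support in `U` that are at least `1` on `K`. -/
structure IsCapacityTest (K U : Set V) (φ : V → ℝ) : Prop where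
  contDiff : ContDiff ℝ (⊤ : ℕ∞) φ
  hasCompactSupport : HasCompactSupport φ
  tsupport_subset : tsupport φ ⊆ U
  one_le : ∀ x ∈ K, 1 ≤ φ x

lemma IsCapacityTest.mono {K' : Set V} (hφ : IsCapacityTest K' U φ) (h : K ⊆ K') :
    IsCapacityTest K U φ :=
  { hφ with one_le := fun x hx ↦ hφ.one_le x (h hx) }

lemma integrable_norm_fderiv_rpow [MeasurableSpace V] [BorelSpace V] {μ : Measure V}
    [IsFiniteMeasureOnCompacts μ] (hφ : ContDiff ℝ 1 φ) (hsupp : HasCompactSupport φ)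
    (hp : 0 < p) : Integrable (fun x ↦ ‖fderiv ℝ φ x‖ ^ p) μ :=
  ((hφ.continuous_fderiv one_ne_zero).norm.rpow_const fun _ ↦
    Or.inr hp.le).integrable_of_hasCompactSupport ((hsupp.fderiv ℝ).norm.rpow_const hp.ne')

lemma exists_contDiff_deriv_eq_neg {g : ℝ → ℝ} (hg : ContDiff ℝ (⊤ : ℕ∞) g)
    (hsupp : Function.support g ⊆ Ioo a b) (hg₁ : ∫ s, g s = 1) :
    ∃ f : ℝ → ℝ, ContDiff ℝ (⊤ : ℕ∞) f ∧ deriv f = -g ∧ (∀ s ≤ a, f s = 1) ∧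
      ∀ s, b ≤ s → f s = 0 := by
  have hderiv : ∀ s, HasDerivAt (fun s ↦ 1 - ∫ t in a..s, g t) (-g s) s := fun s ↦
    (intervalIntegral.integral_hasDerivAt_right (hg.continuous.intervalIntegrable _ _)
      (hg.continuous.stronglyMeasurableAtFilter _ _) hg.continuous.continuousAt).const_sub 1
  have hderiv_eq : deriv (fun s ↦ 1 - ∫ t in a..s, g t) = -g := funext fun s ↦ (hderiv s).deriv
  refine ⟨fun s ↦ 1 - ∫ t in a..s, g t, contDiff_infty_iff_deriv.2
    ⟨fun s ↦ (hderiv s).differentiableAt, hderiv_eq ▸ hg.neg⟩, hderiv_eq, fun s hs ↦ ?_,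
    fun s hs ↦ ?_⟩
  · rw [sub_eq_self, intervalIntegral.integral_zero_ae]
    refine Eventually.of_forall fun t ht ↦ Function.notMem_support.1 fun h ↦ ?_
    rw [uIoc_of_ge hs] at ht
    exact (hsupp h).1.not_ge ht.2
  · beta_reduce
    rw [intervalIntegral.integral_eq_integral_of_support_subset
      (hsupp.trans (Ioo_subset_Ioc_self.trans (Ioc_subset_Ioc_right hs))), hg₁, sub_self]

end CapacityTests

section RadialTests

open Set Metric Module Topology

variable {V : Type*} [NormedAddCommGroup V] {p a b : ℝ} {f : ℝ → ℝ}

lemma hasCompactSupport_comp_norm_sub [ProperSpace V] {α : Type*} [Zero α] {f : ℝ → α}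
    (hf : ∀ s, b ≤ s → f s = 0) (x₀ : V) : HasCompactSupport fun x ↦ f ‖x - x₀‖ :=
  HasCompactSupport.intro (isCompact_closedBall x₀ b) fun x hx ↦
    hf _ (by simpa only [mem_closedBall_iff_norm, not_le] using hx : b < ‖x - x₀‖).le

lemma integral_comp_norm_sub [NormedSpace ℝ V] [FiniteDimensional ℝ V] [Nontrivial V]
    [MeasurableSpace V] [BorelSpace V] (μ : Measure V) [μ.IsAddHaarMeasure] (f : ℝ → ℝ) (x₀ : V) :
    ∫ x, f ‖x - x₀‖ ∂μ =
      μ.toSphere.real univ * ∫ s in Ioi (0 : ℝ), s ^ (finrank ℝ V - 1) * f s := by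
  rw [integral_sub_right_eq_self (fun x ↦ f ‖x‖) x₀, integral_fun_norm_addHaar,
    μ.toSphere_real_apply_univ]
  simp only [nsmul_eq_mul, smul_eq_mul, mul_assoc]

variable [InnerProductSpace ℝ V] [FiniteDimensional ℝ V]

lemma isCapacityTest_comp_norm_sub {c : ℝ} (ha : 0 < a) (hbc : b < c)
    (hf : ContDiff ℝ (⊤ : ℕ∞) f) (hf₁ : ∀ s ≤ a, f s = 1) (hf₀ : ∀ s, b ≤ s → f s = 0) (x₀ : V) :
    IsCapacityTest (closedBall x₀ a) (ball x₀ c) fun x ↦ f ‖x - x₀‖ where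
  contDiff := contDiff_comp_norm_sub hf
    (by filter_upwards [Iic_mem_nhds ha] with s hs using (hf₁ s hs).trans (hf₁ 0 ha.le).symm) x₀
  hasCompactSupport := hasCompactSupport_comp_norm_sub hf₀ x₀
  tsupport_subset := by
    refine (closure_minimal (fun x hx ↦ ?_) isClosed_closedBall).trans (closedBall_subset_ball hbc)
    rw [mem_closedBall_iff_norm]
    exact le_of_not_ge fun h ↦ hx (hf₀ _ h)
  one_le x hx := (hf₁ _ (mem_closedBall_iff_norm.1 hx)).ge

variable [MeasurableSpace V] [BorelSpace V] [Nontrivial V] (μ : Measure V) [μ.IsAddHaarMeasure]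

lemma integral_norm_fderiv_comp_norm_sub_le (hp : 0 < p) (hf : ContDiff ℝ 1 f)
    (hf₀ : f =ᶠ[𝓝 0] fun _ ↦ f 0) (hfb : ∀ s, b ≤ s → deriv f s = 0) (x₀ : V) :
    ∫ x, ‖fderiv ℝ (fun y ↦ f ‖y - x₀‖) x‖ ^ p ∂μ ≤
      μ.toSphere.real univ *
        ∫ s in Ioi (0 : ℝ), s ^ (finrank ℝ V - 1) * |deriv f s| ^ p := by
  rw [← integral_comp_norm_sub μ (fun s ↦ |deriv f s| ^ p) x₀]
  have hcont : Continuous fun x ↦ |deriv f ‖x - x₀‖| ^ p :=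
    ((hf.continuous_deriv le_rfl).comp
      (continuous_id.sub continuous_const).norm).abs.rpow_const fun _ ↦ Or.inr hp.le
  have hsupp : HasCompactSupport fun x ↦ |deriv f ‖x - x₀‖| ^ p :=
    ((hasCompactSupport_comp_norm_sub hfb x₀).norm).rpow_const hp.ne'
  refine integral_mono_of_nonneg (Eventually.of_forall fun x ↦ Real.rpow_nonneg (norm_nonneg _) _)
    (hcont.integrable_of_hasCompactSupport hsupp) (Eventually.of_forall fun x ↦ ?_)
  exact Real.rpow_le_rpow (norm_nonneg _)
    (norm_fderiv_comp_norm_sub_le (hf.differentiable one_ne_zero) hf₀ x₀ x) hp.le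

lemma exists_isCapacityTest_integral_le (hp : ((finrank ℝ V - 1 : ℕ) : ℝ) < p - 1) {a' b' : ℝ}
    (ha : 0 < a) (haa' : a < a') (hab' : a' < b') (hbb' : b' < b) (x₀ : V) :
    ∃ φ, IsCapacityTest (closedBall x₀ a) (ball x₀ b) φ ∧
      ∫ x, ‖fderiv ℝ φ x‖ ^ p ∂μ ≤ μ.toSphere.real univ *
        radialModulus (finrank ℝ V - 1 : ℕ) p a' b' ^ (1 - p) := by
  have hp₁ : 1 < p := by linarith [(finrank ℝ V - 1).cast_nonneg (α := ℝ)]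
  obtain ⟨c, hb'c, hcb⟩ := exists_between hbb'
  obtain ⟨g, hg, hgsupp, hg₁, hgM⟩ := exists_smooth_profile hp₁ hp ha haa' hab' hb'c
  obtain ⟨f, hf, hfg, hf₁, hf₀⟩ := exists_contDiff_deriv_eq_neg hg hgsupp hg₁
  have hf_near : f =ᶠ[𝓝 0] fun _ ↦ f 0 := by
    filter_upwards [Iic_mem_nhds ha] with s hs using (hf₁ s hs).trans (hf₁ 0 ha.le).symm
  have hfc : ∀ s, c ≤ s → deriv f s = 0 := fun s hs ↦ by
    rw [hfg, Pi.neg_apply, neg_eq_zero]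
    exact Function.notMem_support.1 fun h ↦ (hgsupp h).2.not_ge hs
  refine ⟨fun x ↦ f ‖x - x₀‖, isCapacityTest_comp_norm_sub ha hcb hf hf₁ hf₀ x₀,
    (integral_norm_fderiv_comp_norm_sub_le μ (by linarith) (hf.of_le (by simp)) hf_near hfc
      x₀).trans ?_⟩
  simp only [hfg, Pi.neg_apply, abs_neg, ← Real.rpow_natCast]
  gcongr

end RadialTests

section RayEstimate

open Set Metric Module Topology

variable {V : Type*} [NormedAddCommGroup V] [NormedSpace ℝ V] {p ν a b : ℝ} {φ : V → ℝ} {x₀ θ : V}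

lemma isometry_add_smul (x₀ : V) (hθ : ‖θ‖ = 1) : Isometry fun s : ℝ ↦ x₀ + s • θ :=
  Isometry.of_dist_eq fun s t ↦ by
    rw [dist_add_left, dist_eq_norm, ← sub_smul, norm_smul, hθ, mul_one, dist_eq_norm]

lemma one_le_integral_norm_fderiv_ray (hφ : ContDiff ℝ 1 φ) (hθ : ‖θ‖ = 1) (hab : a ≤ b)
    (hφa : 1 ≤ φ (x₀ + a • θ)) (hφb : φ (x₀ + b • θ) = 0) :
    1 ≤ ∫ s in a..b, ‖fderiv ℝ φ (x₀ + s • θ)‖ := by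
  have hderiv : ∀ s : ℝ, HasDerivAt (fun s : ℝ ↦ φ (x₀ + s • θ)) (fderiv ℝ φ (x₀ + s • θ) θ) s :=
    fun s ↦ (hφ.differentiable one_ne_zero _).hasFDerivAt.comp_hasDerivAt s
      (by simpa using ((hasDerivAt_id s).smul_const θ).const_add x₀)
  have hcont : Continuous fun s : ℝ ↦ ‖fderiv ℝ φ (x₀ + s • θ)‖ :=
    ((hφ.continuous_fderiv one_ne_zero).comp (isometry_add_smul x₀ hθ).continuous).norm
  have hbound := norm_sub_le_integral_of_norm_deriv_le_of_le
    (B := fun s ↦ ‖fderiv ℝ φ (x₀ + s • θ)‖) hab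
    (fun s _ ↦ (hderiv s).continuousAt.continuousWithinAt)
    (fun s _ ↦ (hderiv s).differentiableAt.differentiableWithinAt)
    (Eventually.of_forall fun s _ ↦ by
      simpa only [(hderiv s).deriv, hθ, mul_one] using (fderiv ℝ φ (x₀ + s • θ)).le_opNorm θ)
    (hcont.intervalIntegrable _ _)
  rw [hφb, zero_sub, norm_neg] at hbound
  exact hφa.trans ((le_abs_self _).trans hbound)

lemma radialModulus_rpow_le_integral_ray (hν₀ : 0 ≤ ν) (hν : ν < p - 1) (ha : 0 ≤ a)
    (hab : a < b) (hφ : ContDiff ℝ 1 φ) (hsupp : HasCompactSupport φ) (hθ : ‖θ‖ = 1)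
    (hφa : 1 ≤ φ (x₀ + a • θ)) (hφb : φ (x₀ + b • θ) = 0) :
    radialModulus ν p a b ^ (1 - p) ≤
      ∫ s in Ioi (0 : ℝ), s ^ ν * ‖fderiv ℝ φ (x₀ + s • θ)‖ ^ p := by
  have hp : 0 < p := by linarith
  have hray := isometry_add_smul x₀ hθ
  have hcont : Continuous fun s : ℝ ↦ ‖fderiv ℝ φ (x₀ + s • θ)‖ :=
    ((hφ.continuous_fderiv one_ne_zero).comp hray.continuous).norm
  have hint : Integrable fun s : ℝ ↦ s ^ ν * ‖fderiv ℝ φ (x₀ + s • θ)‖ ^ p :=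
    ((continuous_id.rpow_const fun _ ↦ Or.inr hν₀).mul
      (hcont.rpow_const fun _ ↦ Or.inr hp.le)).integrable_of_hasCompactSupport
      ((((hsupp.fderiv ℝ).comp_isClosedEmbedding hray.isClosedEmbedding).norm.rpow_const
        hp.ne').mul_left)
  calc radialModulus ν p a b ^ (1 - p)
      ≤ ∫ s in a..b, s ^ ν * ‖fderiv ℝ φ (x₀ + s • θ)‖ ^ p :=
        radialModulus_rpow_le_integral hν₀ hν ha hab hcont.continuousOn
          (fun _ _ ↦ norm_nonneg _) (one_le_integral_norm_fderiv_ray hφ hθ hab.le hφa hφb)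
    _ = ∫ s in Ioc a b, s ^ ν * ‖fderiv ℝ φ (x₀ + s • θ)‖ ^ p :=
        intervalIntegral.integral_of_le hab.le
    _ ≤ ∫ s in Ioi (0 : ℝ), s ^ ν * ‖fderiv ℝ φ (x₀ + s • θ)‖ ^ p := by
        refine setIntegral_mono_set hint.integrableOn ?_
          (Ioc_subset_Ioi_self.trans (Ioi_subset_Ioi ha)).eventuallyLE
        filter_upwards [ae_restrict_mem measurableSet_Ioi] with s (hs : 0 < s)
        exact mul_nonneg (Real.rpow_nonneg hs.le _) (Real.rpow_nonneg (norm_nonneg _) _)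

lemma IsCapacityTest.toSphere_mul_radialModulus_le [FiniteDimensional ℝ V] [Nontrivial V]
    [MeasurableSpace V] [BorelSpace V] (μ : Measure V) [μ.IsAddHaarMeasure] {K : Set V}
    (hφ : IsCapacityTest K (ball x₀ b) φ) (hp : ((finrank ℝ V - 1 : ℕ) : ℝ) < p - 1)
    (ha : 0 ≤ a) (hab : a < b) {S : Set (sphere (0 : V) 1)} (hS : MeasurableSet S)
    (hSK : ∀ θ ∈ S, x₀ + a • θ.1 ∈ K) :
    μ.toSphere.real S * radialModulus (finrank ℝ V - 1 : ℕ) p a b ^ (1 - p) ≤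
      ∫ x, ‖fderiv ℝ φ x‖ ^ p ∂μ := by
  have hp₀ : 0 < p := by linarith [(finrank ℝ V - 1).cast_nonneg (α := ℝ)]
  have hsmooth : ContDiff ℝ 1 φ := hφ.contDiff.of_le (by simp)
  rw [← integral_add_left_eq_self _ x₀]
  refine toSphere_mul_le_integral μ
    ((integrable_norm_fderiv_rpow hsmooth hφ.hasCompactSupport hp₀).comp_add_left x₀)
    (fun x ↦ Real.rpow_nonneg (norm_nonneg _) _) hS fun θ hθ ↦ ?_
  have hθ₁ : ‖(θ : V)‖ = 1 := mem_sphere_zero_iff_norm.1 θ.2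
  have hφb : φ (x₀ + b • θ.1) = 0 := image_eq_zero_of_notMem_tsupport fun h ↦ by
    have hb : ‖b • θ.1‖ < b := by
      simpa only [add_sub_cancel_left] using mem_ball_iff_norm.1 (hφ.tsupport_subset h)
    rw [norm_smul, hθ₁, mul_one] at hb
    exact hb.not_ge (le_abs_self b)
  simpa only [Real.rpow_natCast] using radialModulus_rpow_le_integral_ray
    (Nat.cast_nonneg (finrank ℝ V - 1)) hp ha hab hsmooth hφ.hasCompactSupport hθ₁
    (hφ.one_le _ (hSK θ hθ)) hφb

end RayEstimate

section BallCapacity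

open Set Metric Module

variable {N : ℕ} {p a b : ℝ} {K U : Set (EuclideanSpace ℝ (Fin N))}
  {x₀ : EuclideanSpace ℝ (Fin N)}

lemma pCapacity_le {φ : EuclideanSpace ℝ (Fin N) → ℝ} (hφ : IsCapacityTest K U φ) :
    pCapacity p K U ≤ ∫ x, ‖fderiv ℝ φ x‖ ^ p := by
  refine csInf_le ⟨0, ?_⟩
    ⟨φ, hφ.contDiff, hφ.hasCompactSupport, hφ.tsupport_subset, hφ.one_le, rfl⟩
  rintro _ ⟨_, _, _, _, _, rfl⟩
  exact integral_nonneg fun _ ↦ Real.rpow_nonneg (norm_nonneg _) _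

-- Without a competitor, `pCapacity p K U` would be the junk value `sInf ∅ = 0`.
lemma le_pCapacity {m : ℝ} (hne : ∃ φ, IsCapacityTest K U φ)
    (hm : ∀ φ, IsCapacityTest K U φ → m ≤ ∫ x, ‖fderiv ℝ φ x‖ ^ p) : m ≤ pCapacity p K U := by
  obtain ⟨φ, hφ⟩ := hne
  refine le_csInf
    ⟨_, φ, hφ.contDiff, hφ.hasCompactSupport, hφ.tsupport_subset, hφ.one_le, rfl⟩ ?_
  rintro _ ⟨ψ, hψ, hcomp, hsupp, hone, rfl⟩
  exact hm ψ ⟨hψ, hcomp, hsupp, hone⟩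

variable [NeZero N]

lemma natCast_pred_lt (hp : (N : ℝ) < p) : ((N - 1 : ℕ) : ℝ) < p - 1 := by
  rw [Nat.cast_pred (NeZero.pos N)]
  linarith

lemma one_lt_of_natCast_lt (hp : (N : ℝ) < p) : 1 < p :=
  (Nat.one_le_cast.2 NeZero.one_le).trans_lt hp

lemma exists_isCapacityTest_le (hp : (N : ℝ) < p) {a' b' : ℝ} (ha : 0 < a) (haa' : a < a')
    (hab' : a' < b') (hbb' : b' < b) (hK : K ⊆ closedBall x₀ a) :
    ∃ φ, IsCapacityTest K (ball x₀ b) φ ∧ ∫ x, ‖fderiv ℝ φ x‖ ^ p ≤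
      (volume : Measure (EuclideanSpace ℝ (Fin N))).toSphere.real univ *
        radialModulus (N - 1 : ℕ) p a' b' ^ (1 - p) := by
  obtain ⟨φ, hφ, hle⟩ := exists_isCapacityTest_integral_le (V := EuclideanSpace ℝ (Fin N)) volume
    (by simpa only [finrank_euclideanSpace_fin] using natCast_pred_lt hp) ha haa' hab' hbb' x₀
  exact ⟨φ, hφ.mono hK, by simpa only [finrank_euclideanSpace_fin] using hle⟩

lemma pCapacity_ball_le (hp : (N : ℝ) < p) (ha : 0 ≤ a) (hab : a < b)
    (hK : K ⊆ closedBall x₀ a) :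
    pCapacity p K (ball x₀ b) ≤
      (volume : Measure (EuclideanSpace ℝ (Fin N))).toSphere.real univ *
        radialModulus (N - 1 : ℕ) p a b ^ (1 - p) := by
  have hp₁ := one_lt_of_natCast_lt hp
  have hν := natCast_pred_lt hp
  have hlim : Tendsto (fun δ ↦ (volume : Measure (EuclideanSpace ℝ (Fin N))).toSphere.real univ *
      radialModulus (N - 1 : ℕ) p (a + δ) (b - δ) ^ (1 - p)) (nhdsWithin 0 (Ioi 0))
      (nhds (volume.toSphere.real univ * radialModulus (N - 1 : ℕ) p a b ^ (1 - p))) :=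
    (((tendsto_radialModulus_shrink hp₁ hν).rpow_const
      (Or.inl (radialModulus_pos hp₁ hν ha hab).ne')).const_mul _).mono_left nhdsWithin_le_nhds
  refine ge_of_tendsto hlim ?_
  filter_upwards [Ioo_mem_nhdsGT (show 0 < (b - a) / 2 by linarith)] with δ ⟨hδ₀, hδ⟩
  obtain ⟨φ, hφ, hle⟩ := exists_isCapacityTest_le hp (a := a + δ / 2) (a' := a + δ)
    (b' := b - δ) (b := b) (by linarith) (by linarith) (by linarith) (by linarith)
    (hK.trans (closedBall_subset_closedBall (by linarith)))
  exact (pCapacity_le hφ).trans hle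

lemma toSphere_mul_le_pCapacity_ball (hp : (N : ℝ) < p) (ha : 0 ≤ a) (hab : a < b)
    (hK : K ⊆ closedBall x₀ a) {S : Set (sphere (0 : EuclideanSpace ℝ (Fin N)) 1)}
    (hS : MeasurableSet S) (hSK : ∀ θ ∈ S, x₀ + a • θ.1 ∈ K) :
    volume.toSphere.real S * radialModulus (N - 1 : ℕ) p a b ^ (1 - p) ≤
      pCapacity p K (ball x₀ b) := by
  obtain ⟨c, hac, hcb⟩ := exists_between hab
  obtain ⟨d, hcd, hdb⟩ := exists_between hcb
  obtain ⟨e, hde, heb⟩ := exists_between hdb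
  obtain ⟨φ, hφ, -⟩ := exists_isCapacityTest_le hp (ha.trans_lt hac) hcd hde heb
    (hK.trans (closedBall_subset_closedBall hac.le))
  refine le_pCapacity ⟨φ, hφ⟩ fun ψ hψ ↦ ?_
  simpa only [finrank_euclideanSpace_fin] using hψ.toSphere_mul_radialModulus_le volume
    (by simpa only [finrank_euclideanSpace_fin] using natCast_pred_lt hp) ha hab hS hSK

lemma pCapacity_closedBall_ball (hp : (N : ℝ) < p) (ha : 0 ≤ a) (hab : a < b)
    (x₀ : EuclideanSpace ℝ (Fin N)) :
    pCapacity p (closedBall x₀ a) (ball x₀ b) =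
      (volume : Measure (EuclideanSpace ℝ (Fin N))).toSphere.real univ *
        radialModulus (N - 1 : ℕ) p a b ^ (1 - p) := by
  refine (pCapacity_ball_le hp ha hab subset_rfl).antisymm
    (toSphere_mul_le_pCapacity_ball hp ha hab subset_rfl MeasurableSet.univ fun θ _ ↦ ?_)
  simp [norm_smul, abs_of_nonneg ha]

lemma pCapacity_closedBall_ball_pos (hp : (N : ℝ) < p) (ha : 0 ≤ a) (hab : a < b)
    (x₀ : EuclideanSpace ℝ (Fin N)) : 0 < pCapacity p (closedBall x₀ a) (ball x₀ b) := by
  have hM := radialModulus_pos (one_lt_of_natCast_lt hp) (natCast_pred_lt hp) ha hab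
  have hball : 0 < volume.real (ball (0 : EuclideanSpace ℝ (Fin N)) 1) :=
    ENNReal.toReal_pos (measure_ball_pos volume _ one_pos).ne' measure_ball_lt_top.ne
  rw [pCapacity_closedBall_ball hp ha hab, Measure.toSphere_real_apply_univ]
  have hN : 0 < finrank ℝ (EuclideanSpace ℝ (Fin N)) := finrank_pos
  positivity

lemma half_pCapacity_closedBall_le (hp : (N : ℝ) < p) (ha : 0 ≤ a) (hab : a < b)
    (hK : K ⊆ closedBall x₀ a) (ℓ : EuclideanSpace ℝ (Fin N) →L[ℝ] ℝ)
    (hℓ : ∀ θ, ‖θ‖ = 1 → 0 ≤ ℓ θ → x₀ + a • θ ∈ K) :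
    pCapacity p (closedBall x₀ a) (ball x₀ b) / 2 ≤ pCapacity p K (ball x₀ b) := by
  have hM := radialModulus_pos (one_lt_of_natCast_lt hp) (natCast_pred_lt hp) ha hab
  have hS : MeasurableSet {θ : sphere (0 : EuclideanSpace ℝ (Fin N)) 1 | 0 ≤ ℓ θ} :=
    (isClosed_le continuous_const (by fun_prop)).measurableSet
  refine le_trans ?_ (toSphere_mul_le_pCapacity_ball hp ha hab hK hS fun θ hθ ↦
    hℓ θ (mem_sphere_zero_iff_norm.1 θ.2) hθ)
  rw [pCapacity_closedBall_ball hp ha hab, mul_div_right_comm]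
  gcongr
  linarith [toSphere_real_univ_le_two_mul_halfSphere
    (volume : Measure (EuclideanSpace ℝ (Fin N))) ℓ]

end BallCapacity

section PointCapacityRatio

open Metric

variable {N : ℕ} {p : ℝ}

/-- The ratio between the `p`-capacity of the center and that of the closed ball of radius `r`,
both relative to the concentric ball of radius `2 * r` in `ℝᴺ`: the threshold `γ₀`. -/
def pointCapacityRatio (N : ℕ) (p : ℝ) : ℝ :=
  2 ^ ((N : ℝ) - p) * (2 ^ ((p - (N : ℝ)) / (p - 1)) - 1) ^ (p - 1)

lemma pointCapacityRatio_eq_rpow (hp₁ : 1 < p) (hp : (N : ℝ) ≤ p) :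
    pointCapacityRatio N p = (1 - 2 ^ (-((p - N) / (p - 1)))) ^ (p - 1) := by
  have hexp : (N : ℝ) - p = -((p - N) / (p - 1)) * (p - 1) := by
    have : p - 1 ≠ 0 := by linarith
    field_simp
    ring
  have hone : (1 : ℝ) ≤ 2 ^ ((p - N) / (p - 1)) :=
    Real.one_le_rpow one_le_two (div_nonneg (by linarith) (by linarith))
  rw [pointCapacityRatio, hexp, Real.rpow_mul zero_le_two,
    ← Real.mul_rpow (by positivity) (by linarith), mul_sub, mul_one, ← Real.rpow_add two_pos,
    neg_add_cancel, Real.rpow_zero]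

lemma pointCapacityRatio_lt_half [NeZero N] (hp : (N : ℝ) < p) (hp₂ : 2 < p) :
    pointCapacityRatio N p < 1 / 2 := by
  have hα₀ : 0 < (p - N) / (p - 1) := div_pos (by linarith) (by linarith)
  have hα₁ : (p - N) / (p - 1) ≤ 1 := by
    have : (1 : ℝ) ≤ N := Nat.one_le_cast.2 NeZero.one_le
    exact div_le_one_of_le₀ (by linarith) (by linarith)
  have hlt : (2 : ℝ) ^ (-((p - N) / (p - 1))) < 1 :=
    Real.rpow_lt_one_of_one_lt_of_neg one_lt_two (by linarith)
  have hge : (1 / 2 : ℝ) ≤ 2 ^ (-((p - N) / (p - 1))) := calc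
    (1 / 2 : ℝ) = 2 ^ (-1 : ℝ) := by rw [Real.rpow_neg_one, one_div]
    _ ≤ 2 ^ (-((p - N) / (p - 1))) := Real.rpow_le_rpow_of_exponent_le one_le_two (by linarith)
  rw [pointCapacityRatio_eq_rpow (by linarith) hp.le]
  calc (1 - 2 ^ (-((p - N) / (p - 1))) : ℝ) ^ (p - 1) ≤ (1 / 2) ^ (p - 1) :=
        Real.rpow_le_rpow (by linarith) (by linarith) (by linarith)
    _ < 1 / 2 := Real.rpow_lt_self_of_lt_one (by norm_num) (by norm_num) (by linarith)

lemma radialModulus_mul_left {ν r c : ℝ} (hp : 1 < p) (hν : ν < p - 1) (hr : 0 ≤ r) (hc : 0 < c) :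
    radialModulus ν p r (c * r) =
      (1 - c ^ (-(1 - ν / (p - 1)))) * radialModulus ν p 0 (c * r) := by
  have hα : 0 < 1 - ν / (p - 1) := sub_pos.2 ((div_lt_one (sub_pos.2 hp)).2 hν)
  rw [radialModulus_eq hp hν, radialModulus_eq hp hν, Real.zero_rpow hα.ne', sub_zero,
    Real.mul_rpow hc.le hr, Real.rpow_neg hc.le]
  have : c ^ (1 - ν / (p - 1)) ≠ 0 := (Real.rpow_pos_of_pos hc _).ne'
  field_simp

lemma pCapacity_singleton_ball [NeZero N] (hp : (N : ℝ) < p) {r : ℝ} (hr : 0 < r)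
    (x₀ : EuclideanSpace ℝ (Fin N)) :
    pCapacity p {x₀} (ball x₀ (2 * r)) =
      pointCapacityRatio N p * pCapacity p (closedBall x₀ r) (ball x₀ (2 * r)) := by
  have hp₁ := one_lt_of_natCast_lt hp
  have hν := natCast_pred_lt hp
  have hα : 1 - ((N - 1 : ℕ) : ℝ) / (p - 1) = (p - N) / (p - 1) := by
    rw [Nat.cast_pred (NeZero.pos N), one_sub_div (by linarith)]
    ring
  have hratio : 0 < 1 - (2 : ℝ) ^ (-((p - N) / (p - 1))) := sub_pos.2 <|
    Real.rpow_lt_one_of_one_lt_of_neg one_lt_two (neg_neg_of_pos (div_pos (by linarith)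
      (by linarith)))
  rw [← closedBall_zero, pCapacity_closedBall_ball hp le_rfl (by linarith),
    pCapacity_closedBall_ball hp hr.le (by linarith), radialModulus_mul_left hp₁ hν hr.le two_pos,
    hα, pointCapacityRatio_eq_rpow hp₁ hp.le,
    Real.mul_rpow hratio.le (radialModulus_pos hp₁ hν le_rfl (by linarith)).le, mul_left_comm,
    ← mul_assoc (_ ^ (p - 1)), ← Real.rpow_add hratio, sub_add_sub_cancel, sub_self,
    Real.rpow_zero, one_mul]

end PointCapacityRatio

section Inradius

open Set Metric

variable {N : ℕ} {p γ R : ℝ} {Ω : Set (EuclideanSpace ℝ (Fin N))}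

lemma ball_subset_punctured_ball {V : Type*} [NormedAddCommGroup V] {x : V} {r : ℝ}
    (hx : ‖x‖ = r) : ball x r ⊆ ball 0 (2 * r) \ {0} := by
  refine fun y hy ↦ ⟨?_, ?_⟩
  · exact ball_subset_ball' (by rw [dist_zero_right, hx, two_mul]) hy
  · rintro rfl
    rw [mem_ball, dist_zero_left, hx] at hy
    exact hy.false

lemma two_mul_le_of_ball_subset_punctured_ball {V : Type*} [NormedAddCommGroup V]
    [NormedSpace ℝ V] {x : V} {r : ℝ} (hr : 0 < r) (h : ball x r ⊆ ball 0 R \ {0}) :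
    2 * r ≤ R := by
  have hrx : r ≤ ‖x‖ := by
    by_contra! hlt
    exact (h (mem_ball_comm.1 (mem_ball_zero_iff.2 hlt))).2 rfl
  have hx : ‖x‖ ≠ 0 := (hr.trans_le hrx).ne'
  have hmem : (1 + r / ‖x‖) • x ∈ closedBall x r := by
    rw [mem_closedBall_iff_norm, add_smul, one_smul, add_sub_cancel_left, norm_smul,
      Real.norm_of_nonneg (by positivity), div_mul_cancel₀ _ hx]
  have hnorm : ‖(1 + r / ‖x‖) • x‖ = ‖x‖ + r := by
    rw [norm_smul, Real.norm_of_nonneg (by positivity), add_mul, one_mul, div_mul_cancel₀ _ hx]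
  have hclosed : closedBall x r ⊆ closedBall 0 R := by
    rw [← closure_ball x hr.ne']
    exact (closure_mono (h.trans sdiff_subset)).trans closure_ball_subset_closedBall
  linarith [mem_closedBall_zero_iff.1 (hclosed hmem)]

lemma eInradius_punctured_ball [NeZero N] (hR : 0 < R) :
    eInradius (ball (0 : EuclideanSpace ℝ (Fin N)) R \ {0}) = ENNReal.ofReal (R / 2) := by
  refine le_antisymm (sSup_le ?_) (le_sSup ?_)
  · rintro _ ⟨r, hr, rfl, x, hx⟩
    exact ENNReal.ofReal_le_ofReal
      (by linarith [two_mul_le_of_ball_subset_punctured_ball hr hx])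
  · obtain ⟨x, hx⟩ := exists_norm_eq (EuclideanSpace ℝ (Fin N)) (half_pos hR).le
    refine ⟨R / 2, half_pos hR, rfl, x, ?_⟩
    simpa only [mul_div_cancel₀ R two_ne_zero] using ball_subset_punctured_ball hx

lemma add_smul_notMem_ball {V : Type*} [NormedAddCommGroup V] [InnerProductSpace ℝ V]
    {x θ : V} {r : ℝ} (hr : 0 ≤ r) (hθ : ‖θ‖ = 1) (hinner : 0 ≤ inner ℝ x θ) :
    x + r • θ ∉ ball 0 r := by
  rw [mem_ball_zero_iff, not_lt]
  refine le_of_sq_le_sq ?_ (norm_nonneg _)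
  rw [norm_add_sq_real, inner_smul_right, norm_smul, hθ, mul_one, Real.norm_of_nonneg hr]
  linarith [mul_nonneg hr hinner, sq_nonneg ‖x‖]

lemma le_of_isNegligible [NeZero N] (hp : (N : ℝ) < p) (hγ : γ < 1 / 2) (hΩ : Ω ⊆ ball 0 R)
    {x₀ : EuclideanSpace ℝ (Fin N)} {r : ℝ} (hr : 0 < r) (h : IsNegligible p γ Ω x₀ r) :
    r ≤ R := by
  by_contra! hRr
  have hhalf := half_pCapacity_closedBall_le hp hr.le (by linarith : r < 2 * r)
    (sdiff_subset : closedBall x₀ r \ Ω ⊆ _) (innerSL ℝ x₀) fun θ hθ hinner ↦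
      ⟨by simp [norm_smul, hθ, abs_of_pos hr], fun hmem ↦
        add_smul_notMem_ball hr.le hθ hinner (ball_subset_ball hRr.le (hΩ hmem))⟩
  have hpos := pCapacity_closedBall_ball_pos hp hr.le (by linarith : r < 2 * r) x₀
  exact (mul_lt_mul_of_pos_right hγ hpos).not_ge (by linarith [hhalf.trans h])

lemma capInradius_le_of_subset_ball [NeZero N] (hp : (N : ℝ) < p) (hγ : γ < 1 / 2)
    (hΩ : Ω ⊆ ball 0 R) : capInradius p γ Ω ≤ ENNReal.ofReal R := by
  refine sSup_le ?_
  rintro _ ⟨r, hr, rfl, x₀, h⟩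
  exact ENNReal.ofReal_le_ofReal (le_of_isNegligible hp hγ hΩ hr h)

lemma ofReal_le_capInradius (hR : 0 < R) {x₀ : EuclideanSpace ℝ (Fin N)}
    (h : ∀ r ∈ Ioo 0 R, IsNegligible p γ Ω x₀ r) : ENNReal.ofReal R ≤ capInradius p γ Ω := by
  refine le_of_tendsto (ENNReal.continuous_ofReal.continuousWithinAt (s := Iio R)) ?_
  filter_upwards [Ioo_mem_nhdsLT hR] with r hr
  exact le_sSup ⟨r, hr.1, rfl, x₀, h r hr⟩

lemma isNegligible_punctured_ball [NeZero N] (hp : (N : ℝ) < p) (hγ : pointCapacityRatio N p ≤ γ)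
    {r : ℝ} (hr : r ∈ Ioo 0 R) :
    IsNegligible p γ (ball (0 : EuclideanSpace ℝ (Fin N)) R \ {0}) 0 r := by
  have hdiff : closedBall (0 : EuclideanSpace ℝ (Fin N)) r \ (ball 0 R \ {0}) = {0} := by
    rw [sdiff_sdiff_right, sdiff_eq_empty.2 (closedBall_subset_ball hr.2), empty_union,
      inter_eq_right, singleton_subset_iff]
    exact mem_closedBall_self hr.1.le
  rw [IsNegligible, hdiff, pCapacity_singleton_ball hp hr.1]
  gcongr
  exact (pCapacity_closedBall_ball_pos hp hr.1.le (by linarith [hr.1]) 0).le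

lemma ofReal_le_capInradius_punctured_ball [NeZero N] (hp : (N : ℝ) < p) (hR : 0 < R)
    (hγ : pointCapacityRatio N p ≤ γ) :
    ENNReal.ofReal R ≤ capInradius p γ (ball (0 : EuclideanSpace ℝ (Fin N)) R \ {0}) :=
  ofReal_le_capInradius hR fun _ hr ↦ isNegligible_punctured_ball hp hγ hr

end Inradius

theorem punctured_ball_threshold_general (N : ℕ) (p R γ₀ : ℝ)
    (hN : N ≠ 0) (hp : (N : ℝ) < p) (hp₂ : 2 < p) (hR : 0 < R)
    (hγ₀ : γ₀ = 2 ^ ((N : ℝ) - p) * (2 ^ ((p - (N : ℝ)) / (p - 1)) - 1) ^ (p - 1)) :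
    eInradius (Metric.ball (0 : EuclideanSpace ℝ (Fin N)) R \ {0}) = ENNReal.ofReal (R / 2) ∧
    capInradius p γ₀ (Metric.ball (0 : EuclideanSpace ℝ (Fin N)) R \ {0}) = ENNReal.ofReal R ∧
    ∀ γ : ℝ, γ₀ ≤ γ →
      eInradius (Metric.ball (0 : EuclideanSpace ℝ (Fin N)) R \ {0}) <
        capInradius p γ (Metric.ball (0 : EuclideanSpace ℝ (Fin N)) R \ {0}) := by
  have : NeZero N := ⟨hN⟩
  obtain rfl : γ₀ = pointCapacityRatio N p := hγ₀
  have hinradius := eInradius_punctured_ball (N := N) hR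
  refine ⟨hinradius, le_antisymm ?_ (ofReal_le_capInradius_punctured_ball hp hR le_rfl),
    fun γ hγ ↦ ?_⟩
  · exact capInradius_le_of_subset_ball hp (pointCapacityRatio_lt_half hp hp₂) Set.sdiff_subset
  · rw [hinradius]
    exact ((ENNReal.ofReal_lt_ofReal_iff hR).2 (half_lt_self hR)).trans_le
      (ofReal_le_capInradius_punctured_ball hp hR hγ)

/-- Optimality of the threshold `γ₀` in the superconformal range: for the punctured ball
`Ḃ_R = B_R \ {0}`, the classical inradius is `R/2`, while `R_{p,γ₀}(Ḃ_R) = R`; in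
particular `R_{p,γ}(Ḃ_R) > r_{Ḃ_R}` for every `γ₀ ≤ γ < 1`. -/
theorem punctured_ball_threshold (N : ℕ) (p R γ₀ : ℝ)
    (hN : 2 ≤ N) (hp : (N:ℝ) < p) (hR : 0 < R)
    (hγ₀ : γ₀ = 2 ^ ((N:ℝ) - p) * (2 ^ ((p - (N:ℝ)) / (p - 1)) - 1) ^ (p - 1)) :
    eInradius (Metric.ball (0 : EuclideanSpace ℝ (Fin N)) R \ {0}) = ENNReal.ofReal (R / 2) ∧
    capInradius p γ₀ (Metric.ball (0 : EuclideanSpace ℝ (Fin N)) R \ {0}) = ENNReal.ofReal R ∧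
    ∀ γ : ℝ, γ₀ ≤ γ → γ < 1 →
      eInradius (Metric.ball (0 : EuclideanSpace ℝ (Fin N)) R \ {0}) <
        capInradius p γ (Metric.ball (0 : EuclideanSpace ℝ (Fin N)) R \ {0}) := by
  obtain ⟨hinradius, hcap, hlt⟩ := punctured_ball_threshold_general N p R γ₀ (by lia) hp
    ((Nat.ofNat_le_cast.2 hN).trans_lt hp) hR hγ₀
  exact ⟨hinradius, hcap, fun γ hγ _ ↦ hlt γ hγ⟩
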